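/- Let 0 ≤ θ ≤ π. Then the minimum over φ ∈ [0, π] of ∫_{φ − θ/2}^{φ + θ/2} |cos t| dt equals 4 sin²(θ/4), and this minimum is attained at φ = π/2. -/

import Mathlib

open Real

/-!
Moving the centre of the window `[φ - r, φ + r]` changes the integral of `|cos|` over it at the rate
`|cos (φ + r)| - |cos (φ - r)|`. Since `cos (φ + r) ^ 2 - cos (φ - r) ^ 2 = -(sin 2φ * sin 2r)`,
for `0 ≤ 2r ≤ π` this rate is nonpositive when `φ ∈ [0, π/2]` and nonnegative when `φ ∈ [π/2, π]`,
so the integral is least at `φ = π/2`; all other centres are covered by `π`-periodicity.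
-/

section MovingWindow

open MeasureTheory

theorem integral_window_sub_integral_window {E : Type*} [NormedAddCommGroup E] [NormedSpace ℝ E]
    {f : ℝ → E} (hf : ∀ a b, IntervalIntegrable f volume a b) (a b r : ℝ) :
    (∫ t in (b - r)..(b + r), f t) - ∫ t in (a - r)..(a + r), f t =
      ∫ t in a..b, (f (t + r) - f (t - r)) := by
  have hadd : IntervalIntegrable (fun t => f (t + r)) volume a b := by
    simpa only [add_sub_cancel_right] using (hf (a + r) (b + r)).comp_add_right r
  have hsub : IntervalIntegrable (fun t => f (t - r)) volume a b := by
    simpa only [sub_add_cancel] using (hf (a - r) (b - r)).comp_sub_right r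
  rw [intervalIntegral.integral_sub hadd hsub, intervalIntegral.integral_comp_add_right,
    intervalIntegral.integral_comp_sub_right,
    intervalIntegral.integral_interval_sub_interval_comm' (hf _ _) (hf _ _) (hf _ _)]

theorem integral_window_le_integral_window {f : ℝ → ℝ}
    (hf : ∀ a b, IntervalIntegrable f volume a b) {a b r : ℝ} (hab : a ≤ b)
    (h : ∀ t ∈ Set.Icc a b, f (t - r) ≤ f (t + r)) :
    ∫ t in (a - r)..(a + r), f t ≤ ∫ t in (b - r)..(b + r), f t := by
  rw [← sub_nonneg, integral_window_sub_integral_window hf]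
  exact intervalIntegral.integral_nonneg hab fun t ht => sub_nonneg.mpr (h t ht)

theorem periodic_integral_window {E : Type*} [NormedAddCommGroup E] [NormedSpace ℝ E]
    {f : ℝ → E} {T : ℝ} (hf : Function.Periodic f T) (r : ℝ) :
    Function.Periodic (fun a => ∫ t in (a - r)..(a + r), f t) T := fun a => by
  calc ∫ t in (a + T - r)..(a + T + r), f t
      = ∫ t in (a - r)..(a + r), f (t + T) := by
        rw [intervalIntegral.integral_comp_add_right, sub_add_eq_add_sub, add_right_comm]
    _ = ∫ t in (a - r)..(a + r), f t := by simp only [hf _]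

end MovingWindow

theorem cos_add_sq_sub_cos_sub_sq (x y : ℝ) :
    cos (x + y) ^ 2 - cos (x - y) ^ 2 = -(sin (2 * x) * sin (2 * y)) := by
  rw [cos_add, cos_sub, sin_two_mul, sin_two_mul]
  ring

theorem abs_cos_sub_le_abs_cos_add {x y : ℝ} (h : sin (2 * x) * sin (2 * y) ≤ 0) :
    |cos (x - y)| ≤ |cos (x + y)| :=
  sq_le_sq.mp (by linarith [cos_add_sq_sub_cos_sub_sq x y])

theorem periodic_abs_cos : Function.Periodic (fun t => |cos t|) π := fun t => by
  simp only [cos_add_pi, abs_neg]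

theorem intervalIntegrable_abs_cos (a b : ℝ) :
    IntervalIntegrable (fun t => |cos t|) MeasureTheory.volume a b :=
  continuous_cos.abs.intervalIntegrable a b

theorem integral_abs_cos_window_pi_div_two {r : ℝ} (h0 : 0 ≤ r) (hπ : r ≤ π) :
    ∫ t in (π / 2 - r)..(π / 2 + r), |cos t| = 4 * sin (r / 2) ^ 2 := by
  have half : ∫ t in (0 : ℝ)..r, |sin t| = 1 - cos r := by
    rw [← cos_zero, ← integral_sin]
    refine intervalIntegral.integral_congr fun t ht => ?_
    rw [Set.uIcc_of_le h0] at ht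
    exact abs_of_nonneg (sin_nonneg_of_nonneg_of_le_pi ht.1 (ht.2.trans hπ))
  have left : ∫ t in (π / 2 - r)..(π / 2), |cos t| = ∫ t in (0 : ℝ)..r, |sin t| := by
    simpa only [cos_pi_div_two_sub, sub_zero] using
      (intervalIntegral.integral_comp_sub_left (a := 0) (b := r) (fun t => |cos t|) (π / 2)).symm
  have right : ∫ t in (π / 2)..(π / 2 + r), |cos t| = ∫ t in (0 : ℝ)..r, |sin t| := by
    simpa only [cos_add_pi_div_two, abs_neg, zero_add, add_comm r] using
      (intervalIntegral.integral_comp_add_right (a := 0) (b := r) (fun t => |cos t|) (π / 2)).symm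
  have half_angle : cos r = 1 - 2 * sin (r / 2) ^ 2 := by
    rw [← cos_two_mul_eq_one_sub, mul_div_cancel₀ r two_ne_zero]
  rw [← intervalIntegral.integral_add_adjacent_intervals (intervalIntegrable_abs_cos _ (π / 2))
    (intervalIntegrable_abs_cos _ _), left, right, half, half_angle]
  ring

theorem integral_abs_cos_window_pi_div_two_le {r : ℝ} (h0 : 0 ≤ r) (hr : r ≤ π / 2) (φ : ℝ) :
    ∫ t in (π / 2 - r)..(π / 2 + r), |cos t| ≤ ∫ t in (φ - r)..(φ + r), |cos t| := by
  obtain ⟨ψ, ⟨hψ0, hψπ⟩, hψ⟩ :=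
    (periodic_integral_window periodic_abs_cos r).exists_mem_Ico₀ pi_pos φ
  rw [hψ]
  have sin_r : 0 ≤ sin (2 * r) := sin_nonneg_of_nonneg_of_le_pi (by linarith) (by linarith)
  rcases le_total (π / 2) ψ with hge | hle
  · refine integral_window_le_integral_window intervalIntegrable_abs_cos hge fun t ht => ?_
    have sin_t : sin (2 * t) ≤ 0 := by
      rw [← sin_sub_two_pi]
      exact sin_nonpos_of_nonpos_of_neg_pi_le (by linarith [ht.2]) (by linarith [ht.1])
    exact abs_cos_sub_le_abs_cos_add (mul_nonpos_of_nonpos_of_nonneg sin_t sin_r)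
  -- Replacing `r` by `-r` reverses the orientation of the window, hence the inequality.
  · have reversed := integral_window_le_integral_window (r := -r) intervalIntegrable_abs_cos hle
      fun t ht => by
        have sin_t : 0 ≤ sin (2 * t) :=
          sin_nonneg_of_nonneg_of_le_pi (by linarith [ht.1]) (by linarith [ht.2])
        refine abs_cos_sub_le_abs_cos_add ?_
        rw [mul_neg, sin_neg]
        exact mul_nonpos_of_nonneg_of_nonpos sin_t (neg_nonpos.mpr sin_r)
    simp only [sub_neg_eq_add, ← sub_eq_add_neg] at reversed
    rw [intervalIntegral.integral_symm (ψ - r), intervalIntegral.integral_symm (π / 2 - r)]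
      at reversed
    exact neg_le_neg_iff.mp reversed

theorem stmt14_general (θ : ℝ) (h0 : 0 ≤ θ) (hπ : θ ≤ π) :
    IsLeast (Set.range fun φ : ℝ => ∫ t in (φ - θ / 2)..(φ + θ / 2), |cos t|)
      (4 * sin (θ / 4) ^ 2) ∧
    (∫ t in (π / 2 - θ / 2)..(π / 2 + θ / 2), |cos t|) = 4 * sin (θ / 4) ^ 2 := by
  have value : (∫ t in (π / 2 - θ / 2)..(π / 2 + θ / 2), |cos t|) = 4 * sin (θ / 4) ^ 2 := by
    rw [integral_abs_cos_window_pi_div_two (by linarith) (by linarith),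
      show θ / 2 / 2 = θ / 4 by ring]
  refine ⟨⟨⟨π / 2, value⟩, ?_⟩, value⟩
  rintro _ ⟨φ, rfl⟩
  exact value ▸ integral_abs_cos_window_pi_div_two_le (by linarith) (by linarith) φ

/-- for `0 ≤ θ ≤ π`, the minimum over `φ ∈ [0, π]` of
`∫_{φ−θ/2}^{φ+θ/2} |cos t| dt` equals `4 sin²(θ/4)`, and it is attained at `φ = π/2`. -/
theorem stmt14 (θ : ℝ) (h0 : 0 ≤ θ) (hπ : θ ≤ π) :
    IsLeast ((fun φ : ℝ => ∫ t in (φ - θ / 2)..(φ + θ / 2), |Real.cos t|) '' Set.Icc 0 π)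
      (4 * Real.sin (θ / 4) ^ 2) ∧
    (∫ t in (π / 2 - θ / 2)..(π / 2 + θ / 2), |Real.cos t|) = 4 * Real.sin (θ / 4) ^ 2 := by
  obtain ⟨⟨-, lower⟩, value⟩ := stmt14_general θ h0 hπ
  exact ⟨⟨⟨π / 2, ⟨by positivity, half_le_self pi_nonneg⟩, value⟩,
    lowerBounds_mono_set (Set.image_subset_range _ _) lower⟩, value⟩
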